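/- arXiv:math/0401300 — 7 statements merged into one kernel-verified Lean document; each statement's English description precedes it below -/
import Mathlib

section
/- For all nonnegative integers m and n, the product m!·n!·(m+n)! divides (2m)!·(2n)! (equivalently, (2m)!·(2n)!/(m!·n!·(m+n)!) is an integer). -/
theorem catalan_aux (n : ℕ) : ∀ m : ℕ, ∃ z : ℤ,
    z * ((m.factorial : ℤ) * n.factorial * (m + n).factorial)
      = ((2 * m).factorial : ℤ) * (2 * n).factorial := by
  induction n with
  | zero =>
    intro m
    refine ⟨(Nat.choose (2 * m) m : ℤ), ?_⟩
    have h := Nat.choose_mul_factorial_mul_factorial (show m ≤ 2 * m by omega)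
    rw [show 2 * m - m = m by omega] at h
    have h' : ((Nat.choose (2 * m) m : ℤ)) * m.factorial * m.factorial
        = (2 * m).factorial := by exact_mod_cast h
    simp only [Nat.factorial_zero, Nat.mul_zero, Nat.add_zero, Nat.cast_one, mul_one]
    rw [← h']; ring
  | succ n ih =>
    intro m
    obtain ⟨z₁, h₁⟩ := ih m
    obtain ⟨z₂, h₂⟩ := ih (m + 1)
    refine ⟨4 * z₁ - z₂, ?_⟩
    rw [show m + 1 + n = (m + n) + 1 by ring, show 2 * (m + 1) = 2 * m + 1 + 1 by ring] at h₂
    rw [show m + (n + 1) = (m + n) + 1 by ring, show 2 * (n + 1) = 2 * n + 1 + 1 by ring]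
    simp only [Nat.factorial_succ] at h₂ ⊢
    push_cast at h₁ h₂ ⊢
    have hm : ((m : ℤ) + 1) ≠ 0 := by positivity
    apply mul_left_cancel₀ hm
    linear_combination (4 * ((m : ℤ) + 1) * (n + 1) * (m + n + 1)) * h₁ - ((n : ℤ) + 1) * h₂

theorem catalan_observation (m n : ℕ) :
    (Nat.factorial m * Nat.factorial n * Nat.factorial (m + n)) ∣
      (Nat.factorial (2 * m) * Nat.factorial (2 * n)) := by
  obtain ⟨z, hz⟩ := catalan_aux n m
  rw [← Int.natCast_dvd_natCast]
  push_cast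
  exact ⟨z, by rw [← hz]; ring⟩
end

section
/- For all nonnegative integers m and n with (m,n) ≠ (0,0), the number 2·m!·n!·(m+n)! divides (2m)!·(2n)!; consequently the super Catalan number T(m,n) = (1/2)·(2m)!·(2n)!/(m!·n!·(m+n)!) is a positive integer for all (m,n) ≠ (0,0). -/
/-- The super Catalan number `T(m,n) = (1/2) * (2m)! * (2n)! / (m! * n! * (m+n)!)`,
as a rational number. -/
def superCatalan (m n : ℕ) : ℚ :=
  (Nat.factorial (2 * m) * Nat.factorial (2 * n) : ℚ) /
    (2 * (Nat.factorial m * Nat.factorial n * Nat.factorial (m + n)))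

open Nat in
theorem superCatalan_aux (n : ℕ) : ∀ m : ℕ, ∃ k : ℤ,
    ((2 * m)! : ℤ) * ((2 * n)! : ℤ) = k * ((m ! : ℤ) * (n ! : ℤ) * ((m + n)! : ℤ)) ∧
      (¬(m = 0 ∧ n = 0) → 2 ∣ k) := by
  induction n with
  | zero =>
    intro m
    refine ⟨(Nat.centralBinom m : ℤ), ?_, ?_⟩
    · have h := Nat.choose_mul_factorial_mul_factorial (n := 2 * m) (k := m) (by omega)
      rw [show 2 * m - m = m by omega] at h
      rw [Nat.centralBinom]
      simp only [Nat.mul_zero, Nat.factorial_zero, Nat.add_zero]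
      rw [← h]
      push_cast
      ring
    · intro h
      have := Nat.two_dvd_centralBinom_of_one_le (n := m) (by omega)
      exact_mod_cast this
  | succ n ih =>
    intro m
    obtain ⟨k, hk, -⟩ := ih m
    obtain ⟨l, hl, hl2⟩ := ih (m + 1)
    refine ⟨4 * k - l, ?_, ?_⟩
    · rw [show 2 * (m + 1) = 2 * m + 1 + 1 by ring, show m + 1 + n = m + n + 1 by ring] at hl
      rw [show 2 * (n + 1) = 2 * n + 1 + 1 by ring, show m + (n + 1) = m + n + 1 by ring]
      simp only [Nat.factorial_succ] at hl ⊢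
      push_cast at hl ⊢
      have hm : ((m : ℤ) + 1) ≠ 0 := by positivity
      have hl' : 2 * (2 * (m : ℤ) + 1) * (((2 * m)! : ℤ) * ((2 * n)! : ℤ))
          = l * ((m ! : ℤ) * (n ! : ℤ) * ((m + n + 1) * ((m + n)! : ℤ))) := by
        apply mul_left_cancel₀ hm
        linear_combination hl
      linear_combination 4 * ((n : ℤ) + 1) * (m + n + 1) * hk - ((n : ℤ) + 1) * hl'
    · intro _
      have := hl2 (by omega)
      omega

theorem superCatalan_pos_integer (m n : ℕ) (h : ¬(m = 0 ∧ n = 0)) :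
    (2 * (Nat.factorial m * Nat.factorial n * Nat.factorial (m + n))) ∣
        (Nat.factorial (2 * m) * Nat.factorial (2 * n)) ∧
      ∃ k : ℕ, 0 < k ∧ superCatalan m n = k := by
  have hd : (2 * (Nat.factorial m * Nat.factorial n * Nat.factorial (m + n))) ∣
        (Nat.factorial (2 * m) * Nat.factorial (2 * n)) := by
    obtain ⟨k, hk, hk2⟩ := superCatalan_aux n m
    obtain ⟨j, rfl⟩ := hk2 h
    zify
    exact ⟨j, by rw [hk]; ring⟩
  refine ⟨hd, ?_⟩
  obtain ⟨k, hk⟩ := hd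
  have h1 := Nat.factorial_pos (2 * m)
  have h2 := Nat.factorial_pos (2 * n)
  have h3 := Nat.factorial_pos m
  have h4 := Nat.factorial_pos n
  have h5 := Nat.factorial_pos (m + n)
  refine ⟨k, ?_, ?_⟩
  · rcases Nat.eq_zero_or_pos k with h0 | h0
    · have := Nat.mul_pos h1 h2
      rw [hk, h0] at this
      simp at this
    · exact h0
  · have hq : (Nat.factorial (2 * m) * Nat.factorial (2 * n) : ℚ) =
        (2 * (Nat.factorial m * Nat.factorial n * Nat.factorial (m + n))) * k := by
      exact_mod_cast hk
    rw [superCatalan, hq]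
    apply mul_div_cancel_left₀
    positivity
end

section
/- In the ring of formal power series in two variables x, y over ℚ, the identity (1 − ∑_{m≥1, n≥1} T(m,n)·x^m·y^n) · (1 + ∑_{m≥1, n≥1} C_m·C_n·x^m·y^n) = 1 holds; equivalently, 1 + ∑_{m,n≥1} C_m C_n x^m y^n is the multiplicative inverse of 1 − ∑_{m,n≥1} T(m,n) x^m y^n. -/
/-- The two-variable power series `1 - ∑_{m,n ≥ 1} T(m,n) x^m y^n`. -/
def superCatalanSeries : MvPowerSeries (Fin 2) ℚ := fun d =>
  if d = 0 then 1 else if 1 ≤ d 0 ∧ 1 ≤ d 1 then -superCatalan (d 0) (d 1) else 0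

/-- The two-variable power series `1 + ∑_{m,n ≥ 1} C_m C_n x^m y^n`. -/
def catalanPairSeries : MvPowerSeries (Fin 2) ℚ := fun d =>
  if d = 0 then 1 else
    if 1 ≤ d 0 ∧ 1 ≤ d 1 then (catalan (d 0) : ℚ) * (catalan (d 1) : ℚ) else 0

namespace SC
open PowerSeries Finset

/-- one-variable Catalan series over the rationals -/
noncomputable def cs : PowerSeries ℚ := PowerSeries.mk fun n => (catalan n : ℚ)
/-- central binomial series -/
noncomputable def bs : PowerSeries ℚ := PowerSeries.mk fun n => (Nat.centralBinom n : ℚ)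

lemma cs_eq : cs = 1 + X * cs ^ 2 := by
  have h := congrArg (PowerSeries.map (Nat.castRingHom ℚ)) catalanSeries_sq_mul_X_add_one
  have e : PowerSeries.map (Nat.castRingHom ℚ) catalanSeries = cs := by
    ext n; simp [cs]
  simp only [map_add, map_mul, map_pow, map_one, PowerSeries.map_X, e] at h
  linear_combination -h

lemma bs_eq : bs = cs + X * derivative ℚ cs := by
  ext n
  rw [map_add]
  have h := succ_mul_catalan_eq_centralBinom n
  cases n with
  | zero => simp [bs, cs]
  | succ n =>
    rw [PowerSeries.coeff_succ_X_mul, PowerSeries.coeff_derivative]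
    simp only [bs, cs, coeff_mk]
    rw [← h]; push_cast; ring

lemma bs_cs : (2 - cs) * bs = cs := by
  have h := cs_eq
  have hd := congrArg (derivative ℚ) h
  have hd' : derivative ℚ cs = cs ^ 2 + X * (2 * cs * derivative ℚ cs) := by
    conv_lhs => rw [hd]
    simp [Derivation.leibniz, Derivation.leibniz_pow]
    ring
  rw [bs_eq]
  linear_combination (X * cs) * hd' + (-2 * X * derivative ℚ cs -cs) * h

/-- iterated power series from a double sequence -/
noncomputable def mk2 (f : ℕ → ℕ → ℚ) : PowerSeries (PowerSeries ℚ) :=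
  PowerSeries.mk fun m => PowerSeries.mk fun n => f m n

lemma cf_C (a : PowerSeries ℚ) (m n : ℕ) :
    coeff n (coeff m (C a)) = if m = 0 then coeff n a else 0 := by
  rw [coeff_C]; split_ifs <;> simp

lemma cf_map (a : PowerSeries ℚ) (m n : ℕ) :
    coeff n (coeff m (PowerSeries.map C a)) = if n = 0 then coeff m a else 0 := by
  rw [PowerSeries.coeff_map, coeff_C]

lemma cf_one (m n : ℕ) :
    coeff n (coeff m (1 : PowerSeries (PowerSeries ℚ))) = if m = 0 ∧ n = 0 then 1 else 0 := by
  rw [coeff_one]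
  by_cases hm : m = 0 <;> simp [hm, coeff_one]

lemma cf_mk2 (f : ℕ → ℕ → ℚ) (m n : ℕ) : coeff n (coeff m (mk2 f)) = f m n := by
  simp [mk2]

lemma sc_rec (m n : ℕ) :
    superCatalan (m+1) n + superCatalan m (n+1) = 4 * superCatalan m n := by
  unfold superCatalan
  have e1 : m + 1 + n = (m + n) + 1 := by ring
  have e2 : m + (n + 1) = (m + n) + 1 := by ring
  have e3 : 2 * (m + 1) = (2 * m + 1) + 1 := by ring
  have e4 : 2 * (n + 1) = (2 * n + 1) + 1 := by ring
  rw [e1, e2, e3, e4]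
  simp only [Nat.factorial_succ]
  have := Nat.factorial_ne_zero m
  have := Nat.factorial_ne_zero n
  have := Nat.factorial_ne_zero (m+n)
  push_cast
  have h1 : (m:ℚ) + 1 ≠ 0 := by positivity
  have h2 : (n:ℚ) + 1 ≠ 0 := by positivity
  have h3 : (m:ℚ) + n + 1 ≠ 0 := by positivity
  field_simp
  ring

lemma sc_comm (m n : ℕ) : superCatalan m n = superCatalan n m := by
  unfold superCatalan
  rw [add_comm m n]; congr 1 <;> ring

lemma sc_zero (m : ℕ) : 2 * superCatalan m 0 = Nat.centralBinom m := by
  unfold superCatalan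
  rw [Nat.centralBinom_eq_two_mul_choose, Nat.cast_choose ℚ (by omega : m ≤ 2 * m)]
  have e : 2 * m - m = m := by omega
  have := Nat.factorial_ne_zero m
  rw [e]; simp; field_simp

lemma sc_zero' (m : ℕ) : 2 * superCatalan 0 m = Nat.centralBinom m := by
  rw [sc_comm, sc_zero]

lemma F_rec : 2 * ((X : PowerSeries (PowerSeries ℚ)) + C X - 4 * (C X * X)) * mk2 superCatalan
    = C X * C bs + X * PowerSeries.map C bs := by
  have : 2 * ((X : PowerSeries (PowerSeries ℚ)) + C X - 4 * (C X * X)) * mk2 superCatalan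
    = X * (C (C 2) * mk2 superCatalan) + C X * (C (C 2) * mk2 superCatalan)
      - C X * (X * (C (C 8) * mk2 superCatalan)) := by
    have h2 : C (C (2:ℚ)) = (2 : PowerSeries (PowerSeries ℚ)) := by
      rw [map_ofNat, map_ofNat]
    have h8 : C (C (8:ℚ)) = (8 : PowerSeries (PowerSeries ℚ)) := by
      rw [map_ofNat, map_ofNat]
    rw [h2, h8]; ring
  rw [this]
  ext m n
  cases m with
  | zero =>
    cases n with
    | zero => simp [coeff_zero_eq_constantCoeff]
    | succ n =>
      simp only [map_add, map_sub, coeff_C_mul, coeff_zero_X_mul, coeff_succ_X_mul, mk2, coeff_mk, bs,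
        mul_zero, map_zero, coeff_zero_C, sc_zero']
      simp
  | succ m =>
    cases n with
    | zero =>
      simp only [map_add, map_sub, coeff_C_mul, coeff_zero_X_mul, coeff_succ_X_mul, mk2, coeff_mk, bs,
        mul_zero, map_zero, sc_zero, PowerSeries.coeff_map, coeff_zero_C]
      simp
    | succ n =>
      have := sc_rec m n
      simp only [map_add, map_sub, coeff_C_mul, coeff_zero_X_mul, coeff_succ_X_mul, mk2, coeff_mk, bs,
        mul_zero, map_zero, PowerSeries.coeff_map, coeff_succ_C]
      have h0 : coeff (n+1) (C ((m+1).centralBinom : ℚ)) = 0 := by rw [coeff_succ_C]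
      have hA : (coeff (m+1)) (C (PowerSeries.mk fun n => (n.centralBinom : ℚ))) = 0 := by
        simp [coeff_succ_C]
      simp [coeff_C, coeff_succ_C] at *
      linarith

/-- iterated version of the first series -/
noncomputable def A : PowerSeries (PowerSeries ℚ) :=
  mk2 fun m n => if m = 0 ∧ n = 0 then 1 else if 1 ≤ m ∧ 1 ≤ n then -superCatalan m n else 0
/-- iterated version of the second series -/
noncomputable def G : PowerSeries (PowerSeries ℚ) :=
  mk2 fun m n => if m = 0 ∧ n = 0 then 1 else if 1 ≤ m ∧ 1 ≤ n then catalan m * catalan n else 0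

lemma A_eq : 2 * A = 1 - 2 * mk2 superCatalan + C bs + PowerSeries.map C bs := by
  rw [two_mul, two_mul]
  ext m n
  have h00 := sc_zero 0
  have h1 := sc_zero m
  have h1' := sc_zero' n
  simp only [map_add, map_sub, cf_one, cf_C, cf_map, A, cf_mk2, bs, coeff_mk]
  rcases m with _ | m <;> rcases n with _ | n <;> simp at * <;> linarith

lemma coeff_prod (a b : PowerSeries ℚ) (m n : ℕ) :
    coeff n (coeff m (C a * PowerSeries.map C b)) = coeff n a * coeff m b := by
  rw [coeff_C_mul, PowerSeries.coeff_map, coeff_mul_C]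

lemma G_eq : G = 1 + (PowerSeries.map C cs - 1) * (C cs - 1) := by
  have : (PowerSeries.map C cs - 1) * (C cs - 1) = C (cs - 1) * PowerSeries.map C (cs - 1) := by
    simp; ring
  rw [this]
  ext m n
  rw [map_add, map_add, coeff_prod]
  rcases m with _ | m <;> rcases n with _ | n <;>
    simp [G, mk2, cs, coeff_one, mul_comm]

lemma AG : A * G = 1 := by
  have hA := A_eq
  have hF := F_rec
  have hc := congrArg (PowerSeries.map (C (R := ℚ))) cs_eq
  have hd := congrArg (C (R := PowerSeries ℚ)) cs_eq
  have hB := congrArg (PowerSeries.map (C (R := ℚ))) bs_cs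
  have hE := congrArg (C (R := PowerSeries ℚ)) bs_cs
  rw [G_eq]
  simp only [map_add, map_sub, map_mul, map_pow, map_one, PowerSeries.map_X, map_ofNat] at hc hd hB hE
  have n1 : PowerSeries.map C cs - 1 + (C cs - 1) ≠ 0 := by
    intro h
    have := congrArg (fun s => coeff 1 (coeff 0 s)) h
    simp only [map_add, map_sub, cf_one, cf_C, cf_map, cs, coeff_mk] at this
    simp at this
  have n2 : 2 - PowerSeries.map C cs ≠ 0 := by
    intro h
    rw [← one_add_one_eq_two] at h
    have := congrArg (fun s => coeff 0 (coeff 0 s)) h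
    simp only [map_add, map_sub, cf_one, cf_C, cf_map, cs, coeff_mk] at this
    simp at this
  have n3 : 2 - C (R := PowerSeries ℚ) cs ≠ 0 := by
    intro h
    rw [← one_add_one_eq_two] at h
    have := congrArg (fun s => coeff 0 (coeff 0 s)) h
    simp only [map_add, map_sub, cf_one, cf_C, cf_map, cs, coeff_mk] at this
    simp at this
  have n4 : (2 : PowerSeries (PowerSeries ℚ)) ≠ 0 := by
    intro h
    rw [← one_add_one_eq_two] at h
    have := congrArg (fun s => coeff 0 (coeff 0 s)) h
    simp only [map_add, cf_one] at this
    norm_num at this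
  generalize PowerSeries.map C cs = c at *
  generalize C cs = d at *
  generalize PowerSeries.map C bs = B at *
  generalize C bs = E at *
  generalize (C X : PowerSeries (PowerSeries ℚ)) = y at *
  generalize (X : PowerSeries (PowerSeries ℚ)) = x at *
  generalize mk2 superCatalan = F at *
  generalize A = A at *
  have hx : x * c ^ 2 = c - 1 := by linear_combination -hc
  have hy : y * d ^ 2 = d - 1 := by linear_combination -hd
  have h1 : (x + y - 4 * (y * x)) * (c^2 * d^2) = ((c - 1) + (d - 1)) * (1 + (c-1)*(d-1)) := by
    linear_combination (d^2 - 4 * y * d^2) * hx + (c^2 - 4 * (c-1)) * hy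
  have h2 : 2 * A * (1 + (c-1)*(d-1)) * ((c - 1) + (d - 1)) =
      ((c - 1) + (d - 1)) * (1 + (c-1)*(d-1)) * (1 + B + E) - c^2 * (d-1) * E - d^2 * (c-1) * B := by
    linear_combination (-2 * A + 1 + B + E) * h1 + (x + y - 4 * (y * x)) * (c^2 * d^2) * hA
      - c^2 * d^2 * hF - c^2 * E * hy - d^2 * B * hx
  apply mul_left_cancel₀ (mul_ne_zero n4 (mul_ne_zero n1 (mul_ne_zero n2 n3)))
  linear_combination (2 - c) * (2 - d) * h2
    + (((c - 1) + (d - 1)) * (1 + (c-1)*(d-1)) - d^2 * (c-1)) * (2 - d) * hB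
    + (((c - 1) + (d - 1)) * (1 + (c-1)*(d-1)) - c^2 * (d-1)) * (2 - c) * hE

/-- the exponent with given coordinates -/
noncomputable def ex (i j : ℕ) : Fin 2 →₀ ℕ := Finsupp.single 0 i + Finsupp.single 1 j

@[simp] lemma ex0 (i j : ℕ) : ex i j 0 = i := by simp [ex]
@[simp] lemma ex1 (i j : ℕ) : ex i j 1 = j := by simp [ex]
lemma ex_eta (d : Fin 2 →₀ ℕ) : ex (d 0) (d 1) = d := by
  ext i; fin_cases i <;> simp
lemma ex_add (i j k l : ℕ) : ex i j + ex k l = ex (i + k) (j + l) := by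
  ext a; fin_cases a <;> simp

lemma sum_anti (f : (Fin 2 →₀ ℕ) → (Fin 2 →₀ ℕ) → ℚ) (m n : ℕ) :
    ∑ p ∈ antidiagonal (ex m n), f p.1 p.2 =
      ∑ p ∈ antidiagonal m, ∑ q ∈ antidiagonal n, f (ex p.1 q.1) (ex p.2 q.2) := by
  rw [← Finset.sum_product']
  refine Finset.sum_nbij' (fun p => ((p.1 0, p.2 0), (p.1 1, p.2 1)))
    (fun q => (ex q.1.1 q.2.1, ex q.1.2 q.2.2)) ?_ ?_ ?_ ?_ ?_
  · rintro ⟨a, b⟩ h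
    rw [HasAntidiagonal.mem_antidiagonal] at h
    have h0 := DFunLike.congr_fun h 0
    have h1 := DFunLike.congr_fun h 1
    simp at h0 h1
    simp [h0, h1]
  · rintro ⟨⟨a, b⟩, ⟨c, d⟩⟩ h
    simp at h
    simp [ex_add, h.1, h.2]
  · rintro ⟨a, b⟩ h
    simp [ex_eta]
  · rintro ⟨⟨a, b⟩, ⟨c, d⟩⟩ h
    simp
  · rintro ⟨a, b⟩ h
    simp [ex_eta]

lemma ex_zero (m n : ℕ) : ex m n = 0 ↔ m = 0 ∧ n = 0 := by
  constructor
  · intro h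
    have h0 := DFunLike.congr_fun h 0
    have h1 := DFunLike.congr_fun h 1
    simp at h0 h1
    exact ⟨h0, h1⟩
  · rintro ⟨rfl, rfl⟩; simp [ex]

end SC

theorem superCatalan_series_inverse :
    superCatalanSeries * catalanPairSeries = 1 := by
  classical
  ext d
  rw [← SC.ex_eta d]
  generalize d 0 = m
  generalize d 1 = n
  rw [MvPowerSeries.coeff_mul,
    SC.sum_anti (fun a b => MvPowerSeries.coeff a superCatalanSeries *
      MvPowerSeries.coeff b catalanPairSeries), MvPowerSeries.coeff_one]
  have h := congrArg (fun s => PowerSeries.coeff n (PowerSeries.coeff m s)) SC.AG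
  simp only [PowerSeries.coeff_mul, map_sum] at h
  have h' : (PowerSeries.coeff n) ((PowerSeries.coeff m) (1 : PowerSeries (PowerSeries ℚ)))
      = if SC.ex m n = 0 then 1 else 0 := by
    simp only [SC.ex_zero, PowerSeries.coeff_one]
    by_cases hm : m = 0 <;> simp [hm, PowerSeries.coeff_one]
  rw [h'] at h
  rw [← h]
  refine Finset.sum_congr rfl fun p _ => Finset.sum_congr rfl fun q _ => ?_
  simp only [MvPowerSeries.coeff_apply, superCatalanSeries, catalanPairSeries, SC.A, SC.G, SC.mk2,
    PowerSeries.coeff_mk, SC.ex_zero, SC.ex0, SC.ex1]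
end

section
/- For every nonnegative integer n, T(2,n) = 4·C_n − C_{n+1} (as an identity of rational numbers; here T(2,n) = 6·(2n)!/(n!·(n+2)!)). -/
theorem catalan_eq_factorial (n : ℕ) :
    (catalan n : ℚ) = (Nat.factorial (2 * n) : ℚ) / (Nat.factorial n * Nat.factorial (n + 1)) := by
  have h := succ_mul_catalan_eq_centralBinom n
  have h2 := Nat.choose_mul_factorial_mul_factorial (show n ≤ 2 * n by omega)
  rw [← Nat.centralBinom_eq_two_mul_choose, ← h, show 2 * n - n = n by omega] at h2
  have h3 : (((n : ℚ) + 1) * catalan n) * Nat.factorial n * Nat.factorial n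
      = Nat.factorial (2 * n) := by exact_mod_cast h2
  have h4 : (Nat.factorial n : ℚ) ≠ 0 := by positivity
  rw [← h3, Nat.factorial_succ]
  push_cast
  field_simp

theorem superCatalan_two (n : ℕ) :
    superCatalan 2 n = 4 * (catalan n : ℚ) - (catalan (n + 1) : ℚ) := by
  have h4 : (Nat.factorial n : ℚ) ≠ 0 := by positivity
  rw [catalan_eq_factorial, catalan_eq_factorial, superCatalan,
    show 2 * (n + 1) = 2 * n + 1 + 1 by ring, show 2 + n = n + 1 + 1 by ring]
  simp only [Nat.factorial_succ, show Nat.factorial (2 * 2) = 24 by rfl,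
    show Nat.factorial 2 = 2 by rfl]
  push_cast
  field_simp
  ring
end

section
/- For every integer n ≥ 1, the Catalan number C_n equals the number of ordered pairs (P,Q) of Dyck paths with semilength(P) + semilength(Q) = n such that P is nonempty and h(P) ≤ h(Q) + 1. -/
/-- A ballot path: a sequence of steps, each `+1` or `-1`, all of whose
partial sums are nonnegative. -/
def IsBallot (P : List ℤ) : Prop :=
  (∀ s ∈ P, s = 1 ∨ s = -1) ∧ ∀ k, 0 ≤ (P.take k).sum

/-- A Dyck path of semilength `n`: a ballot path with `2n` steps ending at level `0`. -/
def IsDyck (n : ℕ) (P : List ℤ) : Prop :=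
  IsBallot P ∧ P.length = 2 * n ∧ P.sum = 0

/-- The height of a path: the maximum of its partial sums (`0` for the empty path). -/
def pathHeight (P : List ℤ) : ℤ :=
  (((List.range (P.length + 1)).map fun k => (P.take k).sum).foldr max 0)

namespace CatPairs

open BinaryTree

abbrev BT := BinaryTree Unit

/-- Height of the Dyck path encoded by a tree. -/
def ht : BT → ℤ
  | .nil => 0
  | .node _ l r => max (ht l + 1) (ht r)

/-- The Dyck path encoded by a tree. -/
def toL : BT → List ℤ
  | .nil => []
  | .node _ l r => 1 :: (toL l ++ (-1 :: toL r))

/-- `B, Q, C ↦ B U Q D C`. -/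
def ins : BT → BT → BT → BT
  | .nil, q, c => .node () q c
  | .node _ l r, q, c => .node () l (ins r q c)

/-- The map `(U B D C, Q) ↦ B U Q D C`. -/
def glue : BT × BT → BT
  | (.nil, _) => .nil
  | (.node _ b c, q) => ins b q c

lemma ht_nonneg (t : BT) : 0 ≤ ht t := by
  induction t with
  | nil => simp [ht]
  | node _ l r h1 h2 => simp [ht]; omega

lemma numNodes_ins (b q c : BT) :
    (ins b q c).numNodes = b.numNodes + q.numNodes + c.numNodes + 1 := by
  induction b with
  | nil => simp [ins]
  | node _ l r h1 h2 => simp [ins, h2]; omega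

lemma ht_ins (b q c : BT) (h : ht b ≤ ht q) (h' : ht c ≤ ht q + 1) :
    ht (ins b q c) = ht q + 1 := by
  induction b with
  | nil => simp [ins, ht]; omega
  | node _ l r h1 h2 =>
    simp only [ins, ht] at *
    rw [h2 (by omega)]; omega

lemma ins_inj (b q c b' q' c' : BT) (h : ht b ≤ ht q) (hc : ht c ≤ ht q + 1)
    (h' : ht b' ≤ ht q') (hc' : ht c' ≤ ht q' + 1) (e : ins b q c = ins b' q' c') :
    b = b' ∧ q = q' ∧ c = c' := by
  induction b generalizing b' with
  | nil =>
    cases b' with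
    | nil => simpa [ins] using e
    | node _ l r =>
      simp only [ins, node.injEq, true_and] at e
      obtain ⟨rfl, rfl⟩ := e
      simp only [ht] at h'
      rw [ht_ins _ _ _ (by omega) hc'] at hc
      omega
  | node _ l r h1 h2 =>
    cases b' with
    | nil =>
      simp only [ins, node.injEq, true_and] at e
      obtain ⟨rfl, rfl⟩ := e
      simp only [ht] at h
      rw [ht_ins _ _ _ (by omega) hc] at hc'
      omega
    | node _ l' r' =>
      simp only [ins, node.injEq, true_and] at e
      simp only [ht] at h h'
      obtain ⟨rfl, e⟩ := e
      obtain ⟨rfl, rfl, rfl⟩ := h2 r' (by omega) (by omega) e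
      simp

lemma ins_surj (t : BT) (ht0 : t ≠ .nil) :
    ∃ b q c, ht b ≤ ht q ∧ ht c ≤ ht q + 1 ∧ ins b q c = t := by
  induction t with
  | nil => simp at ht0
  | node _ l r h1 h2 =>
    by_cases hlr : ht r ≤ ht l + 1
    · exact ⟨.nil, l, r, by simpa [ht] using ht_nonneg l, hlr, rfl⟩
    · have hl := ht_nonneg l
      obtain ⟨b, q, c, hb, hc, e⟩ := h2 (by rintro rfl; simp [ht] at hlr; omega)
      refine ⟨.node () l b, q, c, ?_, hc, by simp [ins, e]⟩
      have := ht_ins b q c hb hc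
      rw [e] at this
      simp only [ht]; omega

/-! Lists. -/

lemma foldr_max_le (L : List ℤ) (m : ℤ) :
    L.foldr max 0 ≤ m ↔ 0 ≤ m ∧ ∀ x ∈ L, x ≤ m := by
  induction L with
  | nil => simp
  | cons a L ih => simp [ih]; tauto

lemma pathHeight_le (P : List ℤ) (m : ℤ) :
    pathHeight P ≤ m ↔ ∀ k, (P.take k).sum ≤ m := by
  unfold pathHeight
  rw [foldr_max_le]
  constructor
  · rintro ⟨_, h⟩ k
    rcases le_total k P.length with hk | hk
    · exact h _ (List.mem_map.2 ⟨k, by simp; omega, rfl⟩)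
    · have := h _ (List.mem_map.2 ⟨P.length, by simp, rfl⟩)
      rwa [List.take_of_length_le hk, ← List.take_length (l := P)]
  · intro h
    refine ⟨by simpa using h 0, ?_⟩
    intro x hx
    obtain ⟨k, _, rfl⟩ := List.mem_map.1 hx
    exact h k

lemma pathHeight_nil : pathHeight [] = 0 := by simp [pathHeight]

lemma pathHeight_cons (s : ℤ) (P : List ℤ) :
    pathHeight (s :: P) = max 0 (s + pathHeight P) := by
  apply eq_of_forall_ge_iff
  intro m
  have e : s + pathHeight P ≤ m ↔ pathHeight P ≤ m - s := by
    constructor <;> intro <;> omega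
  rw [max_le_iff, e, pathHeight_le, pathHeight_le]
  constructor
  · intro h
    refine ⟨by simpa using h 0, fun k => ?_⟩
    have := h (k + 1)
    simp at this; omega
  · rintro ⟨h0, h⟩ k
    cases k with
    | zero => simpa using h0
    | succ k => have := h k; simp; omega

lemma pathHeight_nonneg (P : List ℤ) : 0 ≤ pathHeight P := by
  cases P with
  | nil => simp [pathHeight_nil]
  | cons s P => rw [pathHeight_cons]; omega

lemma pathHeight_append (P Q : List ℤ) :
    pathHeight (P ++ Q) = max (pathHeight P) (P.sum + pathHeight Q) := by
  induction P with
  | nil => simp [pathHeight_nil, pathHeight_nonneg]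
  | cons s P ih => simp only [List.cons_append, pathHeight_cons, ih, List.sum_cons]; omega

lemma sum_toL (t : BT) : (toL t).sum = 0 := by
  induction t with
  | nil => simp [toL]
  | node _ l r h1 h2 => simp [toL, h1, h2]

lemma length_toL (t : BT) : (toL t).length = 2 * t.numNodes := by
  induction t with
  | nil => simp [toL]
  | node _ l r h1 h2 => simp [toL, h1, h2]; omega

lemma pathHeight_toL (t : BT) : pathHeight (toL t) = ht t := by
  induction t with
  | nil => simp [toL, ht, pathHeight_nil]
  | node _ l r h1 h2 =>
    have := ht_nonneg l
    have := ht_nonneg r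
    simp only [toL, ht, pathHeight_cons, pathHeight_append, h1, h2, sum_toL]; omega

/-- Steps are `±1` and all partial sums are at least `-j`. -/
def Bal (j : ℤ) (P : List ℤ) : Prop :=
  (∀ s ∈ P, s = 1 ∨ s = -1) ∧ ∀ k, -j ≤ (P.take k).sum

lemma bal_cons (j s : ℤ) (P : List ℤ) :
    Bal j (s :: P) ↔ 0 ≤ j ∧ (s = 1 ∨ s = -1) ∧ Bal (j + s) P := by
  unfold Bal
  constructor
  · rintro ⟨h1, h2⟩
    refine ⟨by simpa using h2 0, h1 s (by simp), fun x hx => h1 x (by simp [hx]), fun k => ?_⟩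
    have := h2 (k + 1)
    simp at this; omega
  · rintro ⟨h0, h1, h2, h3⟩
    refine ⟨?_, fun k => ?_⟩
    · intro x hx
      rcases List.mem_cons.1 hx with rfl | hx
      · exact h1
      · exact h2 x hx
    · cases k with
      | zero => simpa using h0
      | succ k => have := h3 k; simp; omega

lemma bal_toL_append (t : BT) (j : ℤ) (hj : 0 ≤ j) (R : List ℤ) (h : Bal j R) :
    Bal j (toL t ++ R) := by
  induction t generalizing j R with
  | nil => simpa [toL] using h
  | node _ l r h1 h2 =>
    simp only [toL, List.cons_append, List.append_assoc]
    rw [bal_cons]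
    refine ⟨hj, by simp, h1 _ (by omega) _ ?_⟩
    rw [bal_cons]
    refine ⟨by omega, by simp, ?_⟩
    have := h2 j hj R h
    simpa using this

lemma isBallot_iff (P : List ℤ) : IsBallot P ↔ Bal 0 P := by
  simp [IsBallot, Bal]

lemma isDyck_toL (t : BT) : IsDyck t.numNodes (toL t) := by
  refine ⟨?_, length_toL t, sum_toL t⟩
  rw [isBallot_iff]
  simpa using bal_toL_append t 0 le_rfl [] (by simp [Bal])

lemma parse (P : List ℤ) (j : ℕ) (h : Bal j P) (hs : P.sum = -j) :
    ∃ (t : BT) (ts : List BT), ts.length = j ∧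
      P = toL t ++ ts.flatMap (fun t => -1 :: toL t) := by
  induction P generalizing j with
  | nil =>
    refine ⟨.nil, [], ?_, by simp [toL]⟩
    simp at hs; simp [hs]
  | cons s P ih =>
    rw [bal_cons] at h
    obtain ⟨-, rfl | rfl, h⟩ := h
    · obtain ⟨t, ts, hl, e⟩ := ih (j + 1) (by simpa using h) (by simp at hs ⊢; omega)
      cases ts with
      | nil => simp at hl
      | cons t1 ts =>
        refine ⟨.node () t t1, ts, by simpa using hl, ?_⟩
        simp [toL, e]
    · cases j with
      | zero => exact absurd (h.2 0) (by simp)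
      | succ j =>
        obtain ⟨t, ts, hl, e⟩ := ih j (by simpa using h) (by simp at hs ⊢; omega)
        exact ⟨.nil, t :: ts, by simpa using hl, by simp [toL, e]⟩

lemma exists_toL (n : ℕ) (P : List ℤ) (h : IsDyck n P) : ∃ t, t.numNodes = n ∧ toL t = P := by
  obtain ⟨hb, hl, hs⟩ := h
  rw [isBallot_iff] at hb
  obtain ⟨t, ts, h0, e⟩ := parse P 0 (by simpa using hb) (by simpa using hs)
  rw [List.length_eq_zero_iff] at h0
  subst h0
  simp at e
  refine ⟨t, ?_, e.symm⟩
  have := length_toL t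
  rw [← e] at this
  omega

lemma toL_append_inj (t t' : BT) (R R' : List ℤ) (hR : R.head? ≠ some 1)
    (hR' : R'.head? ≠ some 1) (e : toL t ++ R = toL t' ++ R') : t = t' ∧ R = R' := by
  induction t generalizing t' R R' with
  | nil =>
    cases t' with
    | nil => simpa [toL] using e
    | node _ l r => simp [toL] at e; simp [e] at hR
  | node _ l r h1 h2 =>
    cases t' with
    | nil => simp [toL] at e; simp [← e] at hR'
    | node _ l' r' =>
      simp only [toL, List.cons_append, List.append_assoc, List.cons.injEq, true_and] at e
      obtain ⟨rfl, e2⟩ := h1 l' _ _ (by simp) (by simp) e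
      have e := (List.cons.inj e2).2
      obtain ⟨rfl, rfl⟩ := h2 r' _ _ hR hR' e
      simp

lemma toL_inj : Function.Injective toL := fun t t' e =>
  (toL_append_inj t t' [] [] (by simp) (by simp) (by simpa using e)).1

/-- Admissible pairs of trees. -/
def S (n : ℕ) : Set (BT × BT) :=
  {p | p.1.numNodes + p.2.numNodes = n ∧ p.1 ≠ .nil ∧ ht p.1 ≤ ht p.2 + 1}

lemma glue_image (n : ℕ) (hn : 1 ≤ n) : glue '' S n = {t : BT | t.numNodes = n} := by
  ext t
  constructor
  · rintro ⟨⟨p, q⟩, ⟨h1, h2, h3⟩, rfl⟩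
    cases p with
    | nil => simp at h2
    | node _ b c =>
      simp only [numNodes] at h1
      simp only [glue, Set.mem_ofPred_eq, numNodes_ins]; omega
  · intro h
    simp only [Set.mem_ofPred_eq] at h
    obtain ⟨b, q, c, hb, hc, rfl⟩ := ins_surj t (by rintro rfl; simp at h; omega)
    rw [numNodes_ins] at h
    refine ⟨(.node () b c, q), ⟨?_, by simp, ?_⟩, rfl⟩
    · simp only [numNodes]; omega
    · simp only [ht]; omega

lemma glue_injOn (n : ℕ) : Set.InjOn glue (S n) := by
  rintro ⟨p, q⟩ ⟨-, h2, h3⟩ ⟨p', q'⟩ ⟨-, h2', h3'⟩ e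
  cases p with
  | nil => simp at h2
  | node _ b c =>
    cases p' with
    | nil => simp at h2'
    | node _ b' c' =>
      simp only [ht, max_le_iff] at h3 h3'
      obtain ⟨rfl, rfl, rfl⟩ := ins_inj b q c b' q' c' (by omega) h3.2 (by omega) h3'.2 e
      rfl

lemma toL_image (n : ℕ) : Prod.map toL toL '' S n = {PQ : List ℤ × List ℤ |
        (∃ a b : ℕ, IsDyck a PQ.1 ∧ IsDyck b PQ.2 ∧ a + b = n) ∧
          PQ.1 ≠ [] ∧ pathHeight PQ.1 ≤ pathHeight PQ.2 + 1} := by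
  ext ⟨P, Q⟩
  constructor
  · rintro ⟨⟨p, q⟩, ⟨h1, h2, h3⟩, e⟩
    simp only [Prod.map_apply, Prod.mk.injEq] at e
    obtain ⟨rfl, rfl⟩ := e
    refine ⟨⟨_, _, isDyck_toL p, isDyck_toL q, h1⟩, ?_, ?_⟩
    · intro h
      exact h2 (toL_inj h)
    · simpa only [pathHeight_toL] using h3
  · rintro ⟨⟨a, b, hP, hQ, hab⟩, h2, h3⟩
    obtain ⟨p, hp, rfl⟩ := exists_toL a P hP
    obtain ⟨q, hq, rfl⟩ := exists_toL b Q hQ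
    refine ⟨(p, q), ⟨by simp only [hp, hq, hab], ?_, ?_⟩, rfl⟩
    · rintro rfl
      exact h2 rfl
    · simpa only [pathHeight_toL] using h3

end CatPairs

theorem catalan_eq_card_pairs (n : ℕ) (hn : 1 ≤ n) :
    catalan n =
      Nat.card {PQ : List ℤ × List ℤ //
        (∃ a b : ℕ, IsDyck a PQ.1 ∧ IsDyck b PQ.2 ∧ a + b = n) ∧
          PQ.1 ≠ [] ∧ pathHeight PQ.1 ≤ pathHeight PQ.2 + 1} := by
  have h1 := (CatPairs.glue_injOn n).ncard_image
  have h2 := Set.ncard_image_of_injective (CatPairs.S n)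
    (CatPairs.toL_inj.prodMap CatPairs.toL_inj)
  rw [CatPairs.glue_image n hn, ← BinaryTree.coe_treesOfNumNodesEq, Set.ncard_coe_finset,
    BinaryTree.treesOfNumNodesEq_card_eq_catalan] at h1
  rw [CatPairs.toL_image] at h2
  rw [h1, ← h2]
  rfl
end

section
/- For every integer n ≥ 1, the number of ordered pairs (P,Q) of Dyck paths with semilength(P) + semilength(Q) = n such that h(P) ≤ h(Q) + 1 equals 2·C_n. -/
open Finset BinaryTree

/-- The integer step attached to a Dyck step. -/
def stepVal : DyckStep → ℤ
  | DyckStep.U => 1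
  | DyckStep.D => -1

theorem stepVal_injective : Function.Injective stepVal := by
  intro a b h
  cases a <;> cases b <;> simp_all [stepVal]

theorem sum_map_stepVal (l : List DyckStep) :
    (l.map stepVal).sum = (l.count DyckStep.U : ℤ) - l.count DyckStep.D := by
  induction l with
  | nil => simp
  | cons s l ih =>
    cases s <;> simp [stepVal, ih] <;> ring

/-- The path of a tree. -/
def treePath (t : BinaryTree Unit) : List ℤ := (DyckWord.ofTree t).toList.map stepVal

theorem treePath_injective : Function.Injective treePath := by
  intro s t h
  have h1 := (List.map_injective_iff.mpr stepVal_injective) h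
  have h2 : DyckWord.ofTree s = DyckWord.ofTree t := DyckWord.ext h1
  rw [← DyckWord.toTree_ofTree s, h2, DyckWord.toTree_ofTree]

theorem treePath_nil : treePath nil = [] := rfl

theorem treePath_node (l r : BinaryTree Unit) :
    treePath (node () l r) = (1 :: treePath l) ++ (-1 :: treePath r) := by
  change List.map stepVal ((([DyckStep.U] ++ (DyckWord.ofTree l).toList) ++ [DyckStep.D])
    ++ (DyckWord.ofTree r).toList) = _
  simp [treePath, stepVal]

theorem isDyck_treePath (t : BinaryTree Unit) : IsDyck t.numNodes (treePath t) := by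
  refine ⟨⟨?_, ?_⟩, ?_, ?_⟩
  · intro s hs
    obtain ⟨x, -, rfl⟩ := List.mem_map.mp hs
    cases x <;> simp [stepVal]
  · intro k
    have := (DyckWord.ofTree t).count_D_le_count_U k
    rw [treePath, ← List.map_take, sum_map_stepVal]
    omega
  · have := DyckWord.numNodes_toTree (DyckWord.ofTree t)
    rw [DyckWord.toTree_ofTree] at this
    simp [treePath, this]
  · have := (DyckWord.ofTree t).count_U_eq_count_D
    rw [treePath, sum_map_stepVal]
    omega

theorem exists_treePath {n : ℕ} {P : List ℤ} (h : IsDyck n P) :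
    ∃ t : BinaryTree Unit, t.numNodes = n ∧ treePath t = P := by
  obtain ⟨⟨h1, h2⟩, h3, h4⟩ := h
  obtain ⟨l, rfl⟩ : ∃ l : List DyckStep, l.map stepVal = P := by
    refine ⟨P.map (fun s => if s = 1 then DyckStep.U else DyckStep.D), ?_⟩
    rw [List.map_map]
    conv_rhs => rw [← List.map_id P]
    apply List.map_congr_left
    intro s hs
    rcases h1 s hs with rfl | rfl <;> simp [stepVal]
  let w : DyckWord := ⟨l, by rw [sum_map_stepVal] at h4; omega, by
    intro i
    have := h2 i
    rw [← List.map_take, sum_map_stepVal] at this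
    omega⟩
  have hp : treePath w.toTree = l.map stepVal := by
    rw [treePath, DyckWord.ofTree_toTree]
  refine ⟨w.toTree, ?_, hp⟩
  have := (isDyck_treePath w.toTree).2.1
  rw [hp] at this
  omega

/-- Recursive height. -/
def recHeight : List ℤ → ℤ
  | [] => 0
  | s :: P => max 0 (s + recHeight P)

theorem recHeight_nonneg (P : List ℤ) : 0 ≤ recHeight P := by
  cases P <;> simp [recHeight]

theorem foldr_max_shift (s : ℤ) (L : List ℤ) :
    max 0 (s + L.foldr max 0) = max (max 0 s) ((L.map (fun x => s + x)).foldr max 0) := by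
  induction L with
  | nil => simp
  | cons a L ih => 
    simp only [List.foldr_cons, List.map_cons]
    omega

theorem pathHeight_eq (P : List ℤ) : pathHeight P = recHeight P := by
  induction P with
  | nil => simp [pathHeight, recHeight]
  | cons s P ih =>
    rw [recHeight, ← ih, pathHeight, pathHeight, foldr_max_shift, List.length_cons,
      List.range_succ_eq_map (n := P.length + 1)]
    simp only [List.map_cons, List.map_map, List.foldr_cons, List.take_zero, List.sum_nil]
    rw [List.range_succ_eq_map]
    simp only [List.map_cons, List.map_map, List.foldr_cons, List.take_zero, List.sum_nil,
      Function.comp_def, List.take_succ_cons, List.sum_cons, Nat.succ_eq_add_one]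
    omega

theorem recHeight_append (P Q : List ℤ) :
    recHeight (P ++ Q) = max (recHeight P) (P.sum + recHeight Q) := by
  induction P with
  | nil => simp [recHeight, recHeight_nonneg]
  | cons s P ih =>
    simp only [List.cons_append, recHeight, ih, List.sum_cons]
    omega

/-- Height of the path of a tree. -/
def treeHt : BinaryTree Unit → ℕ
  | nil => 0
  | node _ l r => max (treeHt l + 1) (treeHt r)

theorem pathHeight_treePath (t : BinaryTree Unit) : pathHeight (treePath t) = treeHt t := by
  rw [pathHeight_eq]
  induction t with
  | nil => simp [treePath_nil, recHeight, treeHt]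
  | node a l r ihl ihr =>
    have := (isDyck_treePath l).2.2
    have h0 := recHeight_nonneg (treePath l)
    rw [treePath_node, recHeight_append]
    simp only [recHeight, List.sum_cons, this, ihl, ihr, treeHt]
    push_cast
    omega

theorem treeHt_le (t : BinaryTree Unit) : treeHt t ≤ t.numNodes := by
  induction t with
  | nil => simp [treeHt]
  | node a l r ihl ihr => simp only [treeHt, numNodes]; omega

/-- Number of trees with `n` nodes and path height `< k`. -/
def cnt (k n : ℕ) : ℕ := #{t ∈ treesOfNumNodesEq n | treeHt t < k}

theorem cnt_zero_left (n : ℕ) : cnt 0 n = 0 := by simp [cnt]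

theorem cnt_succ_zero (k : ℕ) : cnt (k + 1) 0 = 1 := by
  simp [cnt, Finset.filter_singleton, treeHt]

theorem cnt_succ_succ (k n : ℕ) :
    cnt (k + 1) (n + 1) = ∑ ij ∈ antidiagonal n, cnt k ij.1 * cnt (k + 1) ij.2 := by
  rw [cnt, treesOfNumNodesEq_succ, filter_biUnion, card_biUnion]
  · apply sum_congr rfl
    rintro ⟨i, j⟩ H
    rw [filter_map, card_map, cnt, cnt, ← card_product, ← filter_product]
    congr 1
    apply filter_congr
    rintro ⟨x, y⟩ -
    change max (treeHt x + 1) (treeHt y) < k + 1 ↔ treeHt x < k ∧ treeHt y < k + 1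
    omega
  · intro a _ b _ hab
    rw [Function.onFun, disjoint_left]
    intro t ht ht'
    apply hab
    simp only [mem_filter, mem_map, mem_product, mem_treesOfNumNodesEq] at ht ht'
    obtain ⟨⟨x, hx, rfl⟩, -⟩ := ht
    obtain ⟨⟨y, hy, he⟩, -⟩ := ht'
    simp only [EmbeddingLike.apply_eq_iff_eq] at he
    subst he
    ext
    · rw [← hx.1, ← hy.1]
    · rw [← hx.2, ← hy.2]

theorem cnt_large {k n : ℕ} (h : n < k) : cnt k n = catalan n := by
  rw [cnt, ← treesOfNumNodesEq_card_eq_catalan, filter_true_of_mem]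
  intro t ht
  have := treeHt_le t
  rw [mem_treesOfNumNodesEq] at ht
  omega

theorem cnt_succ_eq (k n : ℕ) :
    cnt (k + 1) n = cnt k n + #{t ∈ treesOfNumNodesEq n | treeHt t = k} := by
  rw [cnt, cnt, ← card_union_of_disjoint, ← filter_or]
  · congr 1
    apply filter_congr
    intro t _
    omega
  · rw [disjoint_filter]
    intro t _ h
    omega

/-- Generating function of `cnt k`. -/
noncomputable def gf (k : ℕ) : PowerSeries ℤ := PowerSeries.mk fun n => (cnt k n : ℤ)

theorem gf_zero : gf 0 = 0 := by ext n; simp [gf, cnt_zero_left]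

theorem gf_succ (k : ℕ) : gf (k + 1) = 1 + PowerSeries.X * (gf k * gf (k + 1)) := by
  ext n
  cases n with
  | zero => simp [gf, cnt_succ_zero]
  | succ n =>
    rw [map_add, PowerSeries.coeff_succ_X_mul, PowerSeries.coeff_mul]
    simp [gf, cnt_succ_succ, PowerSeries.coeff_one]

theorem gf_key (k : ℕ) : gf (k + 2) * (gf (k + 1) - gf k) = gf (k + 2) - gf k := by
  have h1 := gf_succ k
  have h2 := gf_succ (k + 1)
  rw [show k + 1 + 1 = k + 2 from rfl] at h2
  generalize gf (k + 2) = c at *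
  generalize gf (k + 1) = b at *
  generalize gf k = a at *
  generalize (PowerSeries.X : PowerSeries ℤ) = x at *
  have hu : (1 - x * b) * c = 1 := by linear_combination h2
  -- multiply by the unit `1 - x b`
  have h3 : (1 - x * b) * (c * (b - a) - (c - a)) = 0 := by
    linear_combination (b - a - 1) * hu + h1
  have h4 : c * ((1 - x * b) * (c * (b - a) - (c - a))) = 0 := by rw [h3, mul_zero]
  linear_combination h4 - (c * (b - a) - (c - a)) * hu

theorem gf_sum (N : ℕ) :
    ∑ k ∈ range N, gf (k + 2) * (gf (k + 1) - gf k) = gf (N + 1) + gf N - 1 := by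
  induction N with
  | zero => 
    have h := gf_succ 0
    rw [gf_zero, zero_mul, mul_zero, add_zero] at h
    rw [h, gf_zero]
    simp
  | succ N ih =>
    rw [sum_range_succ, ih, gf_key]
    ring

theorem key_count (n : ℕ) (hn : 1 ≤ n) :
    ∑ k ∈ range (n + 1), ∑ ij ∈ antidiagonal n,
      cnt (k + 2) ij.1 * #{t ∈ treesOfNumNodesEq ij.2 | treeHt t = k} = 2 * catalan n := by
  have h := congrArg (PowerSeries.coeff n) (gf_sum (n + 1))
  rw [map_sum, map_sub, map_add, PowerSeries.coeff_one, if_neg (by omega)] at h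
  simp only [PowerSeries.coeff_mul, map_sub] at h
  simp only [gf, PowerSeries.coeff_mk, cnt_large (show n < n + 1 by omega),
    cnt_large (show n < n + 1 + 1 by omega)] at h
  have e : ((2 * catalan n : ℕ) : ℤ) = 2 * (catalan n : ℤ) := by push_cast; ring
  rw [← Nat.cast_inj (R := ℤ), e]
  simp only [Nat.cast_sum, Nat.cast_mul]
  calc _ = _ := ?_
    _ = _ := h
    _ = _ := by ring
  apply sum_congr rfl
  intro k _
  apply sum_congr rfl
  intro ij _
  rw [cnt_succ_eq k, Nat.cast_add, add_sub_cancel_left]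

/-- The pairs of trees to be counted. -/
def pairSet (n : ℕ) : Finset (BinaryTree Unit × BinaryTree Unit) :=
  (antidiagonal n).biUnion fun ij =>
    {pq ∈ treesOfNumNodesEq ij.1 ×ˢ treesOfNumNodesEq ij.2 | treeHt pq.1 ≤ treeHt pq.2 + 1}

theorem mem_pairSet {n : ℕ} {pq : BinaryTree Unit × BinaryTree Unit} :
    pq ∈ pairSet n ↔ pq.1.numNodes + pq.2.numNodes = n ∧ treeHt pq.1 ≤ treeHt pq.2 + 1 := by
  simp only [pairSet, mem_biUnion, mem_filter, mem_product, mem_treesOfNumNodesEq,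
    HasAntidiagonal.mem_antidiagonal]
  constructor
  · rintro ⟨ij, h, ⟨h1, h2⟩, h3⟩
    exact ⟨by omega, h3⟩
  · rintro ⟨h, h3⟩
    exact ⟨(_, _), h, ⟨rfl, rfl⟩, h3⟩

theorem card_pairSet (n : ℕ) (hn : 1 ≤ n) : #(pairSet n) = 2 * catalan n := by
  rw [← key_count n hn]
  rw [card_eq_sum_card_fiberwise (f := fun pq => treeHt pq.2) (t := range (n + 1))]
  · apply sum_congr rfl
    intro k _
    rw [pairSet, filter_biUnion, card_biUnion]
    · apply sum_congr rfl
      rintro ij _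
      rw [cnt, ← card_product, ← filter_product, filter_filter]
      congr 1
      apply filter_congr
      intro pq _
      omega
    · intro a _ b _ hab
      rw [Function.onFun, disjoint_left]
      intro t ht ht'
      apply hab
      simp only [mem_filter, mem_product, mem_treesOfNumNodesEq] at ht ht'
      ext <;> omega
  · intro pq h
    have h' := mem_pairSet.mp h
    have := treeHt_le pq.2
    simp only [coe_range, Set.mem_Iio]
    omega

theorem card_pairs_height_le (n : ℕ) (hn : 1 ≤ n) :
    Nat.card {PQ : List ℤ × List ℤ //
        (∃ a b : ℕ, IsDyck a PQ.1 ∧ IsDyck b PQ.2 ∧ a + b = n) ∧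
          pathHeight PQ.1 ≤ pathHeight PQ.2 + 1} = 2 * catalan n := by
  rw [← card_pairSet n hn,
    ← card_map ⟨Prod.map treePath treePath, treePath_injective.prodMap treePath_injective⟩]
  apply Nat.subtype_card
  rintro ⟨P, Q⟩
  simp only [mem_map, mem_pairSet, Function.Embedding.coeFn_mk, Prod.exists, Prod.map_apply,
    Prod.mk.injEq]
  constructor
  · rintro ⟨s, t, ⟨h1, h2⟩, rfl, rfl⟩
    refine ⟨⟨_, _, isDyck_treePath s, isDyck_treePath t, h1⟩, ?_⟩
    rw [pathHeight_treePath, pathHeight_treePath]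
    exact_mod_cast h2
  · rintro ⟨⟨a, b, h1, h2, h3⟩, h4⟩
    obtain ⟨s, hs, rfl⟩ := exists_treePath h1
    obtain ⟨t, ht, rfl⟩ := exists_treePath h2
    rw [pathHeight_treePath, pathHeight_treePath] at h4
    exact ⟨s, t, ⟨by omega, by exact_mod_cast h4⟩, rfl, rfl⟩
end

section
/- For every integer k ≥ 0, the identity (1 − C^{k+2})·G_k = (1 + C)·(1 − C^{k+1}) holds in ℚ[[X]]. -/
/-- The generating function `C = ∑_{n ≥ 1} (catalan n) Xⁿ`. -/
def catalanSeries : PowerSeries ℚ :=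
  PowerSeries.mk fun n => if n = 0 then 0 else (catalan n : ℚ)

/-- `G k` is the generating function for Dyck paths of height at most `k`,
counted by semilength. -/
noncomputable def G (k : ℕ) : PowerSeries ℚ :=
  PowerSeries.mk fun n =>
    (Nat.card {P : List ℤ // IsDyck n P ∧ pathHeight P ≤ (k : ℤ)} : ℚ)

/-- Paths of length `m` from level `i` to level `0` staying within `[0,k]`. -/
def stripPaths (k : ℕ) : ℕ → ℤ → Finset (List ℤ)
  | 0, i => if i = 0 then {[]} else ∅
  | m + 1, i => if 0 ≤ i ∧ i ≤ k then
      (stripPaths k m (i + 1)).image (List.cons 1) ∪ (stripPaths k m (i - 1)).image (List.cons (-1))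
      else ∅

lemma mem_stripPaths (k : ℕ) (m : ℕ) : ∀ (i : ℤ) (P : List ℤ), P ∈ stripPaths k m i ↔
    (∀ s ∈ P, s = 1 ∨ s = -1) ∧ P.length = m ∧ i + P.sum = 0 ∧
      ∀ j, 0 ≤ i + (P.take j).sum ∧ i + (P.take j).sum ≤ k := by
  induction m with
  | zero =>
    intro i P
    simp only [stripPaths]
    constructor
    · intro h
      split_ifs at h with hi
      · simp at h; subst h; subst hi; simp
      · simp at h
    · rintro ⟨-, h1, h2, -⟩
      have : P = [] := List.length_eq_zero_iff.1 h1
      subst this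
      simp at h2
      simp [h2]
  | succ m ih =>
    intro i P
    simp only [stripPaths]
    constructor
    · intro h
      split_ifs at h with hi
      · simp only [Finset.mem_union, Finset.mem_image, ih] at h
        rcases h with ⟨Q, ⟨h1, h2, h3, h4⟩, rfl⟩ | ⟨Q, ⟨h1, h2, h3, h4⟩, rfl⟩
        all_goals
          refine ⟨by simpa using h1, by simp [h2], by simp; linarith, ?_⟩
          intro j
          cases j with
          | zero => simpa using hi
          | succ j =>
            have := h4 j
            simp only [List.take_succ_cons, List.sum_cons]
            constructor <;> linarith [this.1, this.2]
      · simp at h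
    · rintro ⟨h1, h2, h3, h4⟩
      have h0 := h4 0
      simp only [List.take_zero, List.sum_nil, add_zero] at h0
      rw [if_pos h0]
      cases P with
      | nil => simp at h2
      | cons a Q =>
        simp only [Finset.mem_union, Finset.mem_image, ih]
        have ha := h1 a (by simp)
        have hQ : ∀ s ∈ Q, s = 1 ∨ s = -1 := fun s hs => h1 s (by simp [hs])
        simp only [List.length_cons, add_left_inj] at h2
        simp only [List.sum_cons] at h3
        have h5 : ∀ j, 0 ≤ i + (a + (Q.take j).sum) ∧ i + (a + (Q.take j).sum) ≤ k := by
          intro j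
          simpa using h4 (j + 1)
        rcases ha with rfl | rfl
        · left
          refine ⟨Q, ⟨hQ, h2, by linarith, fun j => ?_⟩, rfl⟩
          have := h5 j
          constructor <;> linarith [this.1, this.2]
        · right
          refine ⟨Q, ⟨hQ, h2, by linarith, fun j => ?_⟩, rfl⟩
          have := h5 j
          constructor <;> linarith [this.1, this.2]

lemma card_stripPaths_succ (k m : ℕ) (i : ℤ) (h0 : 0 ≤ i) (hk : i ≤ k) :
    (stripPaths k (m + 1) i).card = (stripPaths k m (i + 1)).card + (stripPaths k m (i - 1)).card := by
  simp only [stripPaths, if_pos (And.intro h0 hk)]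
  rw [Finset.card_union_of_disjoint, Finset.card_image_of_injective _ List.cons_injective,
    Finset.card_image_of_injective _ List.cons_injective]
  rw [Finset.disjoint_left]
  intro P hP hP'
  simp only [Finset.mem_image] at hP hP'
  obtain ⟨Q, -, rfl⟩ := hP
  obtain ⟨R, -, h⟩ := hP'
  simp at h

lemma stripPaths_neg (k m : ℕ) (i : ℤ) (h : i < 0) : stripPaths k m i = ∅ := by
  cases m with
  | zero => simp [stripPaths, h.ne]
  | succ m => simp only [stripPaths]; rw [if_neg]; omega

lemma stripPaths_big (k m : ℕ) (i : ℤ) (h : (k : ℤ) < i) : stripPaths k m i = ∅ := by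
  cases m with
  | zero => simp only [stripPaths]; rw [if_neg]; omega
  | succ m => simp only [stripPaths]; rw [if_neg]; omega

lemma stripPaths_short (k m : ℕ) : ∀ (i : ℤ), (m : ℤ) < i → stripPaths k m i = ∅ := by
  induction m with
  | zero => intro i h; simp only [stripPaths]; rw [if_neg]; simp at h; omega
  | succ m ih =>
    intro i h
    push_cast at h
    simp [stripPaths, ih (i + 1) (by omega), ih (i - 1) (by omega)]

/-- Generating function of strip paths from level `i` to `0`, by number of up steps. -/
noncomputable def stripGF (k i : ℕ) : PowerSeries ℚ :=
  PowerSeries.mk fun n => ((stripPaths k (2 * n + i) i).card : ℚ)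

lemma stripGF_zero (k : ℕ) : stripGF k 0 = 1 + PowerSeries.X * stripGF k 1 := by
  ext n
  cases n with
  | zero => simp [stripGF, stripPaths]
  | succ n =>
    rw [map_add, PowerSeries.coeff_succ_X_mul]
    simp only [stripGF, PowerSeries.coeff_mk, PowerSeries.coeff_one]
    have := card_stripPaths_succ k (2 * n + 1) 0 le_rfl (by positivity)
    rw [stripPaths_neg k _ (0 - 1) (by norm_num)] at this
    simp at this
    rw [show 2 * (n + 1) + 0 = 2 * n + 1 + 1 by ring]
    simp [this]

lemma stripGF_succ (k i : ℕ) (hi : i + 1 ≤ k) :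
    stripGF k (i + 1) = stripGF k i + PowerSeries.X * stripGF k (i + 2) := by
  ext n
  cases n with
  | zero =>
    have := card_stripPaths_succ k i (i + 1 : ℕ) (by positivity) (by exact_mod_cast hi)
    rw [stripPaths_short k i ((i + 1 : ℕ) + 1) (by push_cast; omega)] at this
    simp at this
    simp [stripGF, this]
  | succ n =>
    rw [map_add, PowerSeries.coeff_succ_X_mul]
    simp only [stripGF, PowerSeries.coeff_mk]
    have := card_stripPaths_succ k (2 * n + (i + 2)) (i + 1 : ℕ) (by positivity) (by exact_mod_cast hi)
    rw [show ((i + 1 : ℕ) : ℤ) + 1 = (i + 2 : ℕ) by push_cast; ring,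
      show ((i + 1 : ℕ) : ℤ) - 1 = (i : ℕ) by push_cast; ring] at this
    rw [show 2 * (n + 1) + (i + 1) = 2 * n + (i + 2) + 1 by ring, this,
      show 2 * (n + 1) + i = 2 * n + (i + 2) by ring]
    push_cast
    ring

lemma stripGF_top (k : ℕ) : stripGF k (k + 1) = 0 := by
  ext n
  simp only [stripGF, PowerSeries.coeff_mk]
  rw [stripPaths_big _ _ _ (by push_cast; omega)]
  simp

lemma strip_unique (k : ℕ) (D : ℕ → PowerSeries ℚ) (h0 : D 0 = PowerSeries.X * D 1)
    (hs : ∀ i, i + 1 ≤ k → D (i + 1) = D i + PowerSeries.X * D (i + 2)) (ht : D (k + 1) = 0) :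
    ∀ n i, i ≤ k + 1 → PowerSeries.coeff n (D i) = 0 := by
  intro n
  induction n with
  | zero =>
    intro i
    induction i with
    | zero => intro _; rw [h0]; simp
    | succ i ih =>
      intro hi
      by_cases h : i + 1 ≤ k
      · rw [hs i h, map_add, ih (by omega)]; simp
      · rw [show i = k by omega, ht]; simp
  | succ n ihn =>
    intro i
    induction i with
    | zero => intro _; rw [h0, PowerSeries.coeff_succ_X_mul]; exact ihn 1 (by omega)
    | succ i ih =>
      intro hi
      by_cases h : i + 1 ≤ k
      · rw [hs i h, map_add, ih (by omega), PowerSeries.coeff_succ_X_mul, ihn _ (by omega)]; simp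
      · rw [show i = k by omega, ht]; simp

lemma catalanSeries_eq :
    catalanSeries = PowerSeries.X * (1 + catalanSeries) ^ 2 := by
  have h1 : 1 + catalanSeries = PowerSeries.mk fun n => (catalan n : ℚ) := by
    ext n
    cases n with
    | zero => simp [catalanSeries]
    | succ n => simp [catalanSeries, PowerSeries.coeff_one]
  rw [h1]
  ext n
  cases n with
  | zero => simp [catalanSeries]
  | succ n =>
    rw [PowerSeries.coeff_succ_X_mul, pow_two, PowerSeries.coeff_mul]
    simp [catalanSeries, catalan_succ']

lemma foldr_max_le (l : List ℤ) (c : ℤ) (hc : 0 ≤ c) :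
    l.foldr max 0 ≤ c ↔ ∀ x ∈ l, x ≤ c := by
  induction l with
  | nil => simpa using hc
  | cons a l ih => simp [ih]

lemma pathHeight_le (P : List ℤ) (k : ℕ) :
    pathHeight P ≤ k ↔ ∀ j, (P.take j).sum ≤ k := by
  unfold pathHeight
  rw [foldr_max_le _ _ (by positivity)]
  simp only [List.mem_map, List.mem_range, forall_exists_index, and_imp]
  constructor
  · intro h j
    by_cases hj : j < P.length + 1
    · exact h _ j hj rfl
    · have := h _ P.length (by omega) rfl
      rw [List.take_of_length_le (by omega)]
      simpa using this
  · rintro h x j - rfl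
    exact h j

lemma G_eq (k : ℕ) : G k = stripGF k 0 := by
  ext n
  simp only [G, stripGF, PowerSeries.coeff_mk]
  congr 1
  rw [← Nat.card_eq_finsetCard]
  apply Nat.card_congr
  apply Equiv.subtypeEquivRight
  intro P
  rw [mem_stripPaths, pathHeight_le]
  simp only [IsDyck, IsBallot, Nat.cast_zero, zero_add, add_zero]
  constructor
  · rintro ⟨⟨⟨h1, h2⟩, h3, h4⟩, h5⟩
    exact ⟨h1, h3, h4, fun j => ⟨h2 j, h5 j⟩⟩
  · rintro ⟨h1, h3, h4, h5⟩
    exact ⟨⟨⟨h1, fun j => (h5 j).1⟩, h3, h4⟩, fun j => (h5 j).2⟩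

theorem G_formula (k : ℕ) :
    (1 - catalanSeries ^ (k + 2)) * G k =
      (1 + catalanSeries) * (1 - catalanSeries ^ (k + 1)) := by
  have hC := catalanSeries_eq
  rw [G_eq]
  set C := catalanSeries
  have key := strip_unique k (fun i => (1 - C ^ (k + 2)) * stripGF k i -
    (1 + C) ^ (i + 1) * (1 - C ^ (k + 1 - i))) ?_ ?_ ?_
  · have : (1 - C ^ (k + 2)) * stripGF k 0 - (1 + C) ^ (0 + 1) * (1 - C ^ (k + 1 - 0)) = 0 := by
      ext n
      simpa using key n 0 (by omega)
    simpa [sub_eq_zero] using this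
  · simp only [stripGF_zero, Nat.sub_zero, Nat.add_sub_cancel]
    linear_combination (-(1 - C ^ k)) * hC
  · intro i hi
    obtain ⟨d, rfl⟩ := Nat.exists_eq_add_of_le hi
    simp only [stripGF_succ _ _ hi]
    rw [show i + 1 + d + 1 - (i + 1) = d + 1 by omega, show i + 1 + d + 1 - i = d + 2 by omega,
      show i + 1 + d + 1 - (i + 2) = d by omega]
    linear_combination ((1 + C) ^ (i + 1) * (1 - C ^ d)) * (-hC)
  · simp [stripGF_top]
end
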